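/- arXiv:1805.09518 — 3 statements merged into one kernel-verified Lean document; each statement's English description precedes it below -/
import Mathlib

section
/- The ordered Ramsey number of the 3-pan graph with ordering B (vertex set {1,2,3,4}, edge set {{2,3},{2,4},{3,4},{1,3}}, i.e., a triangle on {2,3,4} with a pendant edge from vertex 1 to vertex 3) is at most 14: every 2-coloring of the edges of the complete graph on {1,...,14} contains a monochromatic ordered copy of this graph. -/
/-- A 2-coloring `c` of the edges of the complete graph on the ordered vertex set
`{1,…,N}` contains an ordered copy, in color `b`, of the ordered graph with vertex
set `{1,…,n}` and edge set `E` (edges listed as pairs `(i, j)` with `i < j`):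
there is a strictly increasing map `φ : {1,…,n} → {1,…,N}` such that every edge
`(i, j) ∈ E` has `(φ i, φ j)` colored `b`. -/
def ContainsOrderedCopy (n N : ℕ) (E : Finset (ℕ × ℕ)) (c : ℕ → ℕ → Bool) (b : Bool) :
    Prop :=
  ∃ φ : ℕ → ℕ,
    (∀ i, 1 ≤ i → i ≤ n → 1 ≤ φ i ∧ φ i ≤ N) ∧
    (∀ i j, 1 ≤ i → i < j → j ≤ n → φ i < φ j) ∧
    (∀ e ∈ E, c (φ e.1) (φ e.2) = b)

/-- A 2-coloring `c` of the edges of the complete graph on `{1,…,N}` contains a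
monochromatic ordered copy of the ordered graph with vertex set `{1,…,n}` and
edge set `E`. -/
def ContainsMonoOrderedCopy (n N : ℕ) (E : Finset (ℕ × ℕ)) (c : ℕ → ℕ → Bool) : Prop :=
  ∃ b : Bool, ContainsOrderedCopy n N E c b

/-!
Some seven vertices are joined to the last vertex `14` in the same color `s`. If two of them,
`u < v`, are both joined in color `s` to a third one `w > v`, then `u, v, w, 14` form the pan. So,
absent such a copy, each of the seven has at most one smaller `s`-neighbor among them; coloring the
vertices greedily from left to right shows that the `s`-colored graph on the seven is bipartite. One
of its two classes has four vertices, and these span a clique in the other color, which contains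
every ordered graph on four vertices.
-/

section Greedy

variable {V : Type*} [LinearOrder V]

theorem colorable_of_encard_smaller_neighbors_lt [WellFoundedLT V] (G : SimpleGraph V) {n : ℕ}
    (hG : ∀ v, {u | u < v ∧ G.Adj u v}.encard < n) : G.Colorable n := by
  have exists_free_color (v : V) (f : ∀ u < v, Fin n) :
      ∃ k, ∀ u (huv : u < v), G.Adj u v → f u huv ≠ k := by
    by_contra! all_used
    choose nbr nbr_lt nbr_adj color_nbr using all_used
    have nbr_injective : Function.Injective nbr := fun k l hkl ↦ by
      rw [← color_nbr k, ← color_nbr l]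
      congr
    have nbr_maps : Set.MapsTo nbr Set.univ {u | u < v ∧ G.Adj u v} :=
      fun k _ ↦ ⟨nbr_lt k, nbr_adj k⟩
    have := Set.encard_le_encard_of_injOn nbr_maps nbr_injective.injOn
    simp only [Set.encard_univ, ENat.card_eq_coe_fintype_card, Fintype.card_fin] at this
    exact (hG v).not_ge this
  choose free free_ne using exists_free_color
  let C : V → Fin n := wellFounded_lt.fix free
  have C_ne {u v : V} (huv : u < v) (hadj : G.Adj u v) : C u ≠ C v := by
    rw [show C v = free v fun w _ ↦ C w from wellFounded_lt.fix_eq free v]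
    exact free_ne v (fun w _ ↦ C w) u huv hadj
  refine ⟨SimpleGraph.Coloring.mk C fun {u v} hadj ↦ ?_⟩
  rcases hadj.ne.lt_or_gt with huv | hvu
  · exact C_ne huv hadj
  · exact (C_ne hvu hadj.symm).symm

open Classical in
theorem exists_subset_isIndepSet_of_card_smaller_neighbors_lt (G : SimpleGraph V) (S : Finset V)
    {n k : ℕ} (hG : ∀ v ∈ S, {u ∈ S | u < v ∧ G.Adj u v}.card < n) (hS : n * k < S.card) :
    ∃ T ⊆ S, G.IsIndepSet T ∧ k < T.card := by
  have colorable : (G.induce (S : Set V)).Colorable n := by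
    refine colorable_of_encard_smaller_neighbors_lt _ fun v ↦ ?_
    refine lt_of_le_of_lt ?_ (Nat.cast_lt.mpr (hG v v.2))
    rw [← Set.encard_coe_eq_coe_finsetCard]
    refine Set.encard_le_encard_of_injOn (f := Subtype.val) (fun u hu ↦ ?_)
      Subtype.val_injective.injOn
    exact Finset.mem_filter.mpr ⟨u.2, hu⟩
  obtain ⟨C⟩ := colorable
  obtain ⟨i, hi⟩ := Fintype.exists_lt_card_fiber_of_mul_lt_card C (n := k) (by simpa using hS)
  refine ⟨({v | C v = i} : Finset _).map (.subtype _), fun v hv ↦ ?_, ?_, by simpa using hi⟩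
  · obtain ⟨u, -, rfl⟩ := Finset.mem_map.mp hv
    exact u.2
  · rw [Finset.coe_map]
    rintro _ ⟨u, hu, rfl⟩ _ ⟨v, hv, rfl⟩ -
    exact C.not_adj_of_mem_colorClass (Finset.mem_filter.mp hu).2 (Finset.mem_filter.mp hv).2

end Greedy

section ColorGraph

variable {V α : Type*}

/-- The graph of the edges to which `c` gives the color `s`; only the values `c u v` with `u < v`
matter. -/
def colorGraph [LT V] (c : V → V → α) (s : α) : SimpleGraph V :=
  SimpleGraph.fromRel fun u v ↦ u < v ∧ c u v = s

theorem colorGraph_adj_of_lt [Preorder V] {c : V → V → α} {s : α} {u v : V} (huv : u < v) :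
    (colorGraph c s).Adj u v ↔ c u v = s := by
  simp [colorGraph, huv, huv.ne, huv.not_gt]

theorem colorGraph_not [LinearOrder V] (c : V → V → Bool) (s : Bool) :
    colorGraph c (!s) = (colorGraph c s)ᶜ := by
  ext u v
  wlog huv : u < v generalizing u v
  · rcases (not_lt.mp huv).eq_or_lt with rfl | hvu
    · simp
    · simpa only [SimpleGraph.adj_comm] using this v u hvu
  rw [SimpleGraph.compl_adj, colorGraph_adj_of_lt huv, colorGraph_adj_of_lt huv, Bool.eq_not]
  exact (and_iff_right huv.ne).symm

end ColorGraph

section OrderedCopy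

variable {n N : ℕ} {E : Finset (ℕ × ℕ)} {c : ℕ → ℕ → Bool} {s : Bool}

theorem containsOrderedCopy_of_strictMono (ψ : Fin n → ℕ) (hψ : StrictMono ψ)
    (hN : ∀ i, ψ i ∈ Finset.Icc 1 N)
    (hE : ∀ e ∈ E, ∃ i j : Fin n, e = (i.val + 1, j.val + 1) ∧ c (ψ i) (ψ j) = s) :
    ContainsOrderedCopy n N E c s := by
  let φ (i : ℕ) : ℕ := if hi : i - 1 < n then ψ ⟨i - 1, hi⟩ else 0
  have φ_succ (i : Fin n) : φ (i.val + 1) = ψ i := by simp [φ]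
  have exists_succ {i : ℕ} (h1 : 1 ≤ i) (hn : i ≤ n) : ∃ k : Fin n, k.val + 1 = i :=
    ⟨⟨i - 1, by omega⟩, Nat.sub_add_cancel h1⟩
  refine ⟨φ, fun i h1 hn ↦ ?_, fun i j h1 hij hn ↦ ?_, fun e he ↦ ?_⟩
  · obtain ⟨k, rfl⟩ := exists_succ h1 hn
    rw [φ_succ]
    exact Finset.mem_Icc.mp (hN k)
  · obtain ⟨k, rfl⟩ := exists_succ h1 (hij.le.trans hn)
    obtain ⟨l, rfl⟩ := exists_succ (h1.trans hij.le) hn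
    rw [φ_succ, φ_succ]
    exact hψ (Nat.lt_of_succ_lt_succ hij)
  · obtain ⟨i, j, rfl, hc⟩ := hE e he
    rwa [φ_succ, φ_succ]

theorem containsOrderedCopy_of_isClique {T : Finset ℕ} (hT : (colorGraph c s).IsClique T)
    (hTN : T ⊆ Finset.Icc 1 N) (hn : n ≤ T.card)
    (hE : ∀ e ∈ E, 1 ≤ e.1 ∧ e.1 < e.2 ∧ e.2 ≤ n) : ContainsOrderedCopy n N E c s := by
  let ψ := T.orderEmbOfCardLe hn
  have ψ_mem (i : Fin n) : ψ i ∈ T := T.orderEmbOfCardLe_mem hn i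
  refine containsOrderedCopy_of_strictMono ψ ψ.strictMono (fun i ↦ hTN (ψ_mem i)) ?_
  rintro ⟨a, b⟩ he
  obtain ⟨ha, hab, hb⟩ : 1 ≤ a ∧ a < b ∧ b ≤ n := hE _ he
  let i : Fin n := ⟨a - 1, by omega⟩
  let j : Fin n := ⟨b - 1, by omega⟩
  have ψ_lt : ψ i < ψ j := ψ.strictMono (show a - 1 < b - 1 by omega)
  refine ⟨i, j, ?_, (colorGraph_adj_of_lt ψ_lt).mp (hT (ψ_mem i) (ψ_mem j) ψ_lt.ne)⟩
  exact Prod.ext (Nat.sub_add_cancel ha).symm (Nat.sub_add_cancel (ha.trans hab.le)).symm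

end OrderedCopy

section Pan

variable {N : ℕ} {c : ℕ → ℕ → Bool} {s : Bool}

/-- The edge set of the 3-pan with ordering `B`: the triangle `{2, 3, 4}` with the pendant edge
`{1, 3}`. -/
abbrev panB : Finset (ℕ × ℕ) := {(1, 3), (2, 3), (2, 4), (3, 4)}

theorem containsOrderedCopy_panB {u v w z : ℕ} (hu : 1 ≤ u) (huv : u < v) (hvw : v < w)
    (hwz : w < z) (hz : z ≤ N) (uw : c u w = s) (vw : c v w = s) (vz : c v z = s)
    (wz : c w z = s) : ContainsOrderedCopy 4 N panB c s := by
  have strictMono : StrictMono ![u, v, w, z] := by simp [huv, hvw, hwz]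
  refine containsOrderedCopy_of_strictMono ![u, v, w, z] strictMono (fun i ↦ ?_) ?_
  · exact Finset.mem_Icc.mpr ⟨hu.trans (strictMono.monotone (Fin.zero_le i)),
      (strictMono.monotone (Fin.le_last i)).trans hz⟩
  · simp only [Finset.forall_mem_insert, Finset.mem_singleton, forall_eq]
    exact ⟨⟨0, 2, rfl, uw⟩, ⟨1, 2, rfl, vw⟩, ⟨1, 3, rfl, vz⟩, ⟨2, 3, rfl, wz⟩⟩

open Classical in
theorem card_smaller_neighbors_lt_two {S : Finset ℕ} {z : ℕ}
    (hpan : ¬ContainsOrderedCopy 4 N panB c s) (hS : S ⊆ Finset.Ico 1 z) (hz : z ≤ N)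
    (hSz : ∀ v ∈ S, c v z = s) {w : ℕ} (hw : w ∈ S) :
    {u ∈ S | u < w ∧ (colorGraph c s).Adj u w}.card < 2 := by
  rw [Nat.lt_succ_iff, Finset.card_le_one]
  by_contra! ⟨u, hu, v, hv, huv⟩
  wlog hlt : u < v generalizing u v
  · exact this v hv u hu huv.symm (huv.lt_of_le' (not_lt.mp hlt))
  obtain ⟨huS, huw, uw⟩ := Finset.mem_filter.mp hu
  obtain ⟨hvS, hvw, vw⟩ := Finset.mem_filter.mp hv
  rw [colorGraph_adj_of_lt huw] at uw
  rw [colorGraph_adj_of_lt hvw] at vw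
  exact hpan <| containsOrderedCopy_panB (Finset.mem_Ico.mp (hS huS)).1 hlt hvw
    (Finset.mem_Ico.mp (hS hw)).2 hz uw vw (hSz v hvS) (hSz w hw)

end Pan

/-- Every 2-coloring of the edges of the complete graph on `{1,…,14}` contains a
monochromatic ordered copy of the 3-pan with ordering `B` (a triangle on
`{2,3,4}` with pendant edge `(1, 3)`), i.e. `r_<(3-pan) ≤ 14` for this ordering. -/
theorem orderedRamsey_pan_B_le :
    ∀ c : ℕ → ℕ → Bool,
      ContainsMonoOrderedCopy 4 14 {(1, 3), (2, 3), (2, 4), (3, 4)} c := by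
  intro c
  obtain ⟨s, -, hs⟩ := Finset.exists_lt_card_fiber_of_mul_lt_card_of_maps_to
    (s := Finset.Ico 1 14) (t := Finset.univ) (f := fun v ↦ c v 14) (n := 6) (by simp) (by simp)
  set S : Finset ℕ := {v ∈ Finset.Ico 1 14 | c v 14 = s}
  have hS : S ⊆ Finset.Ico 1 14 := Finset.filter_subset _ _
  by_cases hpan : ContainsOrderedCopy 4 14 panB c s
  · exact ⟨s, hpan⟩
  obtain ⟨T, hTS, hT, hT_card⟩ := exists_subset_isIndepSet_of_card_smaller_neighbors_lt
    (colorGraph c s) S (n := 2) (k := 3)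
    (fun _ ↦ card_smaller_neighbors_lt_two hpan hS le_rfl fun _ hv ↦ (Finset.mem_filter.mp hv).2) hs
  rw [← SimpleGraph.isClique_compl, ← colorGraph_not] at hT
  have hT_subset : T ⊆ Finset.Icc 1 14 := hTS.trans (hS.trans Finset.Ico_subset_Icc_self)
  exact ⟨!s, containsOrderedCopy_of_isClique hT hT_subset hT_card (by decide)⟩
end

section
/- Let K_m^1 denote the complete-with-1-pendant ordered graph on m+1 vertices: vertex set {1,...,m+1}, with all edges among {2,...,m+1} together with the edge {1,2}. For all m, n ≥ 2, the off-diagonal ordered Ramsey number satisfies r_<(K_m^1, K_n^1) ≤ R(m,n) + m + n − 1, where R(m,n) is the classical Ramsey number, i.e., the least N such that every red/blue coloring of the edges of the complete graph on N vertices contains a red complete subgraph on m vertices or a blue complete subgraph on n vertices. -/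
/-- The classical Ramsey number `R(m, n)`: the least `N` such that every red/blue
coloring of the edges of the complete graph on `{1,…,N}` contains a red complete
subgraph on `m` vertices or a blue complete subgraph on `n` vertices.
(`c i j = true` means edge `(i, j)` (with `i < j`) is red, `false` means blue.) -/
noncomputable def classicalRamsey (m n : ℕ) : ℕ :=
  sInf {N : ℕ | ∀ c : ℕ → ℕ → Bool,
    (∃ S : Finset ℕ, S ⊆ Finset.Icc 1 N ∧ S.card = m ∧
      ∀ i ∈ S, ∀ j ∈ S, i < j → c i j = true) ∨
    (∃ S : Finset ℕ, S ⊆ Finset.Icc 1 N ∧ S.card = n ∧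
      ∀ i ∈ S, ∀ j ∈ S, i < j → c i j = false)}

/-- The edge set of the complete-with-1-pendant ordered graph `K_m^1` on `m + 1`
vertices: all edges among `{2,…,m+1}` together with the edge `(1, 2)`. -/
def pendantEdges (m : ℕ) : Finset (ℕ × ℕ) :=
  insert (1, 2)
    (((Finset.Icc 2 (m + 1)) ×ˢ (Finset.Icc 2 (m + 1))).filter (fun p => p.1 < p.2))

/-!
Put `N = R(m,n) + m + n - 1` and let `A` (resp. `B`) be the set of vertices of `{2,…,N}` that are
least in a red `K_m` (resp. blue `K_n`) contained in `{2,…,N}`. If some `v ∈ A` has a red edge to a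
smaller vertex, that edge is the pendant edge of a red `K_m^1`. Otherwise all edges from `A`
downwards are blue, and if moreover `|A| ≥ n`, then `n` vertices of `A` form a blue `K_n` whose
least vertex has a blue edge to the vertex `1`, i.e. a blue `K_n^1`. So we may assume `|A| < n` and,
symmetrically, `|B| < m`. Now at least `R(m,n)` vertices of `{2,…,N}` lie outside `A ∪ B`; they
contain a red `K_m` or a blue `K_n`, and its least vertex lies in `A ∪ B`, a contradiction.
-/

open Finset

variable {α β κ : Type*} [LinearOrder α] [LinearOrder β]

theorem exists_strictMonoOn_bijOn [Nonempty β] {s : Finset α} {t : Finset β} (h : #s = #t) :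
    ∃ g : α → β, StrictMonoOn g s ∧ Set.BijOn g s t := by
  let e : s ≃o t := (s.orderIsoOfFin h).symm.trans (t.orderIsoOfFin rfl)
  let g : α → β := Function.extend Subtype.val (fun x ↦ (e x : β)) fun _ ↦ Classical.arbitrary β
  have hg (x : s) : g x = e x := Subtype.val_injective.extend_apply _ _ x
  have hmono : StrictMonoOn g s := fun x hx y hy hxy ↦ by
    rw [hg ⟨x, hx⟩, hg ⟨y, hy⟩]
    exact e.strictMono hxy
  refine ⟨g, hmono, fun x hx ↦ ?_, hmono.injOn, fun y hy ↦ ?_⟩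
  · rw [hg ⟨x, hx⟩]
    exact (e ⟨x, hx⟩).2
  · exact ⟨e.symm ⟨y, hy⟩, (e.symm ⟨y, hy⟩).2, by rw [hg, e.apply_symm_apply]⟩

/-- `S` spans a clique all of whose edges have color `b`. The color of the edge between
`i < j` is `c i j`; the values `c i j` with `j ≤ i` are ignored. -/
def IsMonochromatic (c : α → α → κ) (b : κ) (S : Finset α) : Prop :=
  ∀ i ∈ S, ∀ j ∈ S, i < j → c i j = b

/-- The vertices in `T` contain a clique on `k` vertices all of whose edges have color `b`. -/
def ContainsMonoClique (c : α → α → κ) (b : κ) (k : ℕ) (T : Finset α) : Prop :=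
  ∃ S ⊆ T, #S = k ∧ IsMonochromatic c b S

/-- The arrow relation `T → (m, n)` of Ramsey theory: every 2-coloring of the edges of the complete
graph on `T` contains a red (`true`) `K_m` or a blue (`false`) `K_n`. -/
def RamseyArrow (T : Finset α) (m n : ℕ) : Prop :=
  ∀ c : α → α → Bool, ContainsMonoClique c true m T ∨ ContainsMonoClique c false n T

/-- The neighbors of `v` in `T` that lie above `v` and are joined to it by an edge of color `b`. -/
def upperNeighbors [DecidableEq κ] (c : α → α → κ) (b : κ) (T : Finset α) (v : α) : Finset α :=
  {x ∈ T | v < x ∧ c v x = b}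

open Classical in
/-- The vertices of `T` that are the least vertex of some `K_k` of color `b` contained in `T`: those
to which a pendant edge from below can be attached. -/
noncomputable def cliqueMins (c : α → α → κ) (b : κ) (k : ℕ) (T : Finset α) : Finset α :=
  {v ∈ T | ∃ S ⊆ T, #S = k ∧ IsMonochromatic c b S ∧ IsLeast (S : Set α) v}

theorem mem_cliqueMins {c : α → α → κ} {b : κ} {k : ℕ} {T : Finset α} {v : α} :
    v ∈ cliqueMins c b k T ↔
      v ∈ T ∧ ∃ S ⊆ T, #S = k ∧ IsMonochromatic c b S ∧ IsLeast (S : Set α) v := by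
  simp only [cliqueMins, mem_filter]

theorem cliqueMins_subset (c : α → α → κ) (b : κ) (k : ℕ) (T : Finset α) :
    cliqueMins c b k T ⊆ T := fun _ hv ↦ (mem_cliqueMins.1 hv).1

namespace ContainsMonoClique

variable {c : α → α → κ} {b : κ} {k : ℕ} {T U : Finset α}

theorem zero (c : α → α → κ) (b : κ) (T : Finset α) : ContainsMonoClique c b 0 T :=
  ⟨∅, empty_subset T, card_empty, by simp [IsMonochromatic]⟩

theorem mono (h : ContainsMonoClique c b k T) (hTU : T ⊆ U) : ContainsMonoClique c b k U :=
  let ⟨S, hST, hS⟩ := h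
  ⟨S, hST.trans hTU, hS⟩

theorem of_comp {d : β → β → κ} {g : α → β} {V : Finset β} (hg : StrictMonoOn g T)
    (hTV : Set.MapsTo g T V) (h : ContainsMonoClique (fun i j ↦ d (g i) (g j)) b k T) :
    ContainsMonoClique d b k V := by
  obtain ⟨S, hST, hcard, hmono⟩ := h
  have hgS : StrictMonoOn g S := hg.mono (coe_subset.2 hST)
  refine ⟨S.image g, image_subset_iff.2 fun x hx ↦ hTV (hST hx),
    (card_image_of_injOn hgS.injOn).trans hcard, ?_⟩
  simp only [IsMonochromatic, forall_mem_image]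
  exact fun i hi j hj hij ↦ hmono i hi j hj ((hgS.lt_iff_lt hi hj).1 hij)

theorem succ_of_upperNeighbors [DecidableEq κ] {v : α} (hv : v ∈ T)
    (h : ContainsMonoClique c b k (upperNeighbors c b T v)) :
    ContainsMonoClique c b (k + 1) T := by
  obtain ⟨S, hS, hcard, hmono⟩ := h
  have hS' (x) (hx : x ∈ S) : x ∈ T ∧ v < x ∧ c v x = b := mem_filter.1 (hS hx)
  have hvS : v ∉ S := fun hvS ↦ (hS' v hvS).2.1.false
  refine ⟨insert v S, insert_subset hv fun x hx ↦ (hS' x hx).1,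
    by rw [card_insert_of_notMem hvS, hcard], ?_⟩
  simp only [IsMonochromatic, forall_mem_insert, lt_self_iff_false, false_imp_iff, true_and]
  exact ⟨fun x hx _ ↦ (hS' x hx).2.2,
    fun x hx ↦ ⟨fun hxv ↦ absurd hxv (hS' x hx).2.1.asymm, hmono x hx⟩⟩

theorem exists_mem_cliqueMins (h : ContainsMonoClique c b k U) (hk : 0 < k) (hUT : U ⊆ T) :
    ∃ v ∈ U, v ∈ cliqueMins c b k T := by
  obtain ⟨S, hSU, hcard, hmono⟩ := h
  have hS : S.Nonempty := card_pos.1 (hcard ▸ hk)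
  have hmin : S.min' hS ∈ U := hSU (S.min'_mem hS)
  exact ⟨_, hmin, mem_cliqueMins.2 ⟨hUT hmin, S, hSU.trans hUT, hcard, hmono, S.isLeast_min' hS⟩⟩

end ContainsMonoClique

theorem card_upperNeighbors_add_card_upperNeighbors (c : α → α → Bool) {T : Finset α} {v : α}
    (hv : IsLeast (T : Set α) v) :
    #(upperNeighbors c true T v) + #(upperNeighbors c false T v) + 1 = #T := by
  have herase : {x ∈ T | v < x} = T.erase v := by
    ext x
    simp only [mem_filter, mem_erase]
    exact ⟨fun h ↦ ⟨h.2.ne', h.1⟩, fun h ↦ ⟨h.2, (hv.2 h.2).lt_of_ne' h.1⟩⟩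
  have hsplit := card_filter_add_card_filter_not (s := {x ∈ T | v < x}) (c v · = true)
  simp only [Bool.not_eq_true, filter_filter] at hsplit
  rw [upperNeighbors, upperNeighbors, hsplit, herase, card_erase_add_one hv.1]

namespace RamseyArrow

variable {m n : ℕ}

theorem of_card_le [Nonempty β] {s : Finset α} {t : Finset β} (h : RamseyArrow s m n)
    (hst : #s ≤ #t) : RamseyArrow t m n := fun c ↦ by
  obtain ⟨t', ht', hcard⟩ := exists_subset_card_eq hst
  obtain ⟨g, hg, hbij⟩ := exists_strictMonoOn_bijOn hcard.symm
  have hmaps : Set.MapsTo g s t := hbij.mapsTo.mono_right (coe_subset.2 ht')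
  exact (h fun i j ↦ c (g i) (g j)).imp (.of_comp hg hmaps) (.of_comp hg hmaps)

-- The Erdős–Szekeres recurrence: split the vertices above the least one by the color of their edge
-- to it; one of the two parts is large enough for the induction hypothesis.
theorem of_choose_le_card {T : Finset α} (hT : (m + n).choose m ≤ #T) : RamseyArrow T m n := by
  induction m generalizing n T with
  | zero => exact fun c ↦ .inl (.zero c true T)
  | succ m ihm =>
    induction n generalizing T with
    | zero => exact fun c ↦ .inr (.zero c false T)
    | succ n ihn =>
      intro c
      have hpascal : (m + 1 + (n + 1)).choose (m + 1) =
          (m + (n + 1)).choose m + (m + 1 + n).choose (m + 1) := by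
        rw [show m + 1 + (n + 1) = m + (n + 1) + 1 by ring, Nat.choose_succ_succ',
          show m + (n + 1) = m + 1 + n by ring]
      have hpos : 0 < (m + (n + 1)).choose m := Nat.choose_pos (Nat.le_add_right _ _)
      have hne : T.Nonempty := card_pos.1 (by omega)
      have hcard := card_upperNeighbors_add_card_upperNeighbors c (T.isLeast_min' hne)
      have hmin := T.min'_mem hne
      set v := T.min' hne
      rcases le_or_gt ((m + (n + 1)).choose m) #(upperNeighbors c true T v) with hred | hred
      · exact (ihm hred c).imp (.succ_of_upperNeighbors hmin) (.mono · (filter_subset _ _))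
      · have hblue : (m + 1 + n).choose (m + 1) ≤ #(upperNeighbors c false T v) := by omega
        exact (ihn hblue c).imp (.mono · (filter_subset _ _)) (.succ_of_upperNeighbors hmin)

theorem of_classicalRamsey_le_card [Nonempty α] {T : Finset α} (hT : classicalRamsey m n ≤ #T) :
    RamseyArrow T m n := by
  have hne : {N | RamseyArrow (Icc 1 N) m n}.Nonempty :=
    ⟨(m + n).choose m, of_choose_le_card (by simp)⟩
  have hR : RamseyArrow (Icc 1 (classicalRamsey m n)) m n := Nat.sInf_mem hne
  exact hR.of_card_le (by simpa using hT)

end RamseyArrow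

theorem mem_pendantEdges {m i j : ℕ} :
    (i, j) ∈ pendantEdges m ↔ i = 1 ∧ j = 2 ∨ 2 ≤ i ∧ i < j ∧ j ≤ m + 1 := by
  simp only [pendantEdges, mem_insert, mem_filter, mem_product, mem_Icc, Prod.mk.injEq]
  omega

section Pendant

variable {c : ℕ → ℕ → Bool} {b : Bool} {m n N : ℕ}

theorem IsMonochromatic.containsOrderedCopy_pendantEdges {S : Finset ℕ} {u v : ℕ}
    (hS : IsMonochromatic c b S) (hSN : ∀ x ∈ S, x ≤ N) (hv : IsLeast (S : Set ℕ) v)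
    (hu : 1 ≤ u) (huv : u < v) (hc : c u v = b) :
    ContainsOrderedCopy (#S + 1) N (pendantEdges #S) c b := by
  obtain ⟨g, hg, hbij⟩ := exists_strictMonoOn_bijOn (s := Icc 2 (#S + 1)) (t := S) (by simp)
  have hpos : 0 < #S := card_pos.2 ⟨v, hv.1⟩
  have hgS {i : ℕ} (h2 : 2 ≤ i) (hi : i ≤ #S + 1) : g i ∈ S := hbij.mapsTo (by simp [h2, hi])
  have hug {i : ℕ} (h2 : 2 ≤ i) (hi : i ≤ #S + 1) : u < g i := huv.trans_le (hv.2 (hgS h2 hi))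
  have hlt {i j : ℕ} (h2 : 2 ≤ i) (hij : i < j) (hj : j ≤ #S + 1) : g i < g j :=
    hg (mem_coe.2 (mem_Icc.2 ⟨h2, by omega⟩)) (mem_coe.2 (mem_Icc.2 ⟨by omega, hj⟩)) hij
  have hg2 : g 2 = v := by
    have hleast : IsLeast (Icc 2 (#S + 1) : Set ℕ) 2 := by
      simpa using isLeast_Icc (show 2 ≤ #S + 1 by omega)
    exact (hbij.image_eq ▸ hg.monotoneOn.map_isLeast hleast).unique hv
  have hφ {i : ℕ} (h2 : 2 ≤ i) : Function.update g 1 u i = g i :=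
    Function.update_of_ne (by omega) ..
  have hφ1 : Function.update g 1 u 1 = u := Function.update_self ..
  refine ⟨Function.update g 1 u, fun i h1 hi ↦ ?_, fun i j h1 hij hj ↦ ?_, fun ⟨i, j⟩ he ↦ ?_⟩
  · obtain rfl | h2 := h1.eq_or_lt
    · rw [hφ1]
      exact ⟨hu, huv.le.trans (hSN v hv.1)⟩
    · rw [hφ h2]
      exact ⟨hu.trans (hug h2 hi).le, hSN _ (hgS h2 hi)⟩
  · rw [hφ (show 2 ≤ j by omega)]
    obtain rfl | h2 := h1.eq_or_lt
    · rw [hφ1]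
      exact hug hij hj
    · rw [hφ h2]
      exact hlt h2 hij hj
  · obtain ⟨rfl, rfl⟩ | ⟨h2, hij, hj⟩ := mem_pendantEdges.1 he
    · rwa [hφ1, hφ le_rfl, hg2]
    · rw [hφ h2, hφ (h2.trans hij.le)]
      exact hS _ (hgS h2 (by omega)) _ (hgS (by omega) hj) (hlt h2 hij hj)

theorem containsOrderedCopy_pendantEdges_of_mem_cliqueMins {T : Finset ℕ} {u v : ℕ}
    (hT : ∀ x ∈ T, x ≤ N) (hv : v ∈ cliqueMins c b m T) (hu : 1 ≤ u) (huv : u < v)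
    (hc : c u v = b) :
    ContainsOrderedCopy (m + 1) N (pendantEdges m) c b := by
  obtain ⟨-, S, hS, rfl, hmono, hleast⟩ := mem_cliqueMins.1 hv
  exact hmono.containsOrderedCopy_pendantEdges (fun x hx ↦ hT x (hS hx)) hleast hu huv hc

theorem containsOrderedCopy_pendantEdges_of_le_card (hn : 0 < n) {A : Finset ℕ}
    (hA : A ⊆ Icc 2 N) (hcard : n ≤ #A) (hc : ∀ v ∈ A, ∀ u, 1 ≤ u → u < v → c u v = b) :
    ContainsOrderedCopy (n + 1) N (pendantEdges n) c b := by
  obtain ⟨S, hSA, rfl⟩ := exists_subset_card_eq hcard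
  have hSN (x) (hx : x ∈ S) : 2 ≤ x ∧ x ≤ N := mem_Icc.1 (hA (hSA hx))
  have hmono : IsMonochromatic c b S := fun i hi j hj hij ↦
    hc j (hSA hj) i (one_le_two.trans (hSN i hi).1) hij
  have hmin := S.min'_mem (card_pos.1 hn)
  exact hmono.containsOrderedCopy_pendantEdges (fun x hx ↦ (hSN x hx).2) (S.isLeast_min' _) le_rfl
    (hSN _ hmin).1 (hc _ (hSA hmin) 1 le_rfl (hSN _ hmin).1)

theorem containsOrderedCopy_pendantEdges_or_of_le_card_cliqueMins (hn : 0 < n)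
    (hcard : n ≤ #(cliqueMins c b m (Icc 2 N))) :
    ContainsOrderedCopy (m + 1) N (pendantEdges m) c b ∨
      ContainsOrderedCopy (n + 1) N (pendantEdges n) c (!b) := by
  by_cases h : ∃ v ∈ cliqueMins c b m (Icc 2 N), ∃ u, 1 ≤ u ∧ u < v ∧ c u v = b
  · obtain ⟨v, hv, u, hu, huv, hc⟩ := h
    exact .inl (containsOrderedCopy_pendantEdges_of_mem_cliqueMins
      (fun x hx ↦ (mem_Icc.1 hx).2) hv hu huv hc)
  · push Not at h
    exact .inr (containsOrderedCopy_pendantEdges_of_le_card hn (cliqueMins_subset ..)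
      hcard fun v hv u hu huv ↦ Bool.eq_not_of_ne (h v hv u hu huv))

end Pendant

/-- For all `m, n ≥ 2`, every red/blue coloring of the edges of the complete graph on
`{1,…,R(m,n) + m + n - 1}` contains a red ordered copy of `K_m^1` or a blue ordered
copy of `K_n^1`; that is, `r_<(K_m^1, K_n^1) ≤ R(m,n) + m + n - 1`. -/
theorem orderedRamsey_pendant_le (m n : ℕ) (hm : 2 ≤ m) (hn : 2 ≤ n) :
    ∀ c : ℕ → ℕ → Bool,
      ContainsOrderedCopy (m + 1) (classicalRamsey m n + m + n - 1) (pendantEdges m) c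
        true ∨
      ContainsOrderedCopy (n + 1) (classicalRamsey m n + m + n - 1) (pendantEdges n) c
        false := by
  intro c
  set N := classicalRamsey m n + m + n - 1
  let A := cliqueMins c true m (Icc 2 N)
  let B := cliqueMins c false n (Icc 2 N)
  rcases le_or_gt n #A with hA | hA
  · exact containsOrderedCopy_pendantEdges_or_of_le_card_cliqueMins (by omega) hA
  rcases le_or_gt m #B with hB | hB
  · exact (containsOrderedCopy_pendantEdges_or_of_le_card_cliqueMins (by omega) hB).symm
  have hcard : classicalRamsey m n ≤ #(Icc 2 N \ (A ∪ B)) := by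
    have hsdiff := le_card_sdiff (A ∪ B) (Icc 2 N)
    have hunion := card_union_le A B
    rw [Nat.card_Icc] at hsdiff
    omega
  exfalso
  rcases RamseyArrow.of_classicalRamsey_le_card hcard c with hred | hblue
  · obtain ⟨v, hv, hvA⟩ := hred.exists_mem_cliqueMins (by omega) sdiff_subset
    exact (mem_sdiff.1 hv).2 (mem_union_left B hvA)
  · obtain ⟨v, hv, hvB⟩ := hblue.exists_mem_cliqueMins (by omega) sdiff_subset
    exact (mem_sdiff.1 hv).2 (mem_union_right A hvB)
end

section
/- The ordered Ramsey number of the ordered diamond graph K₄ − e with vertex set {1,2,3,4} and all edges of K₄ except {1,2} equals 12: every 2-coloring of the edges of the complete graph on {1,...,12} contains a monochromatic ordered copy of this graph, and there is a 2-coloring of the edges of the complete graph on {1,...,11} containing no such copy. -/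
/-!
The diamond is the complete split graph `CS(m, k)`, in which `m` independent vertices come first and
are joined to a clique on the last `k` vertices, for `m = k = 2`. The Erdős–Szekeres recursion peels
off the clique from the right: if the left neighbors of the last vertex in color `b` contain a copy
of `CS(m, k)` in color `b`, then adjoining the last vertex gives a copy of `CS(m, k + 1)`. As
`CS(m, 0)` only needs `m` vertices, `m * (k + l).choose k` vertices with `m ≥ 1` always suffice
for `CS(m, k)` in the first color or `CS(m, l)` in the second. For `m = k = l = 2` this number is
`12`, and it is optimal because of a suitable ordering of `11` vertices of the Paley graph on
`ZMod 17`.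
-/

theorem exists_mapsTo_strictMonoOn_Ioc {V : Type*} [LinearOrder V] [Nonempty V] (S : Finset V)
    (a : ℕ) :
    ∃ f : ℕ → V, Set.MapsTo f (Set.Ioc a (a + S.card)) S ∧
      StrictMonoOn f (Set.Ioc a (a + S.card)) := by
  obtain ⟨v₀⟩ := ‹Nonempty V›
  have hlt {i : ℕ} (hi : i ∈ Set.Ioc a (a + S.card)) : i - a - 1 < S.card := by
    have := hi.1
    have := hi.2
    omega
  refine ⟨fun i => if h : i - a - 1 < S.card then S.orderEmbOfFin rfl ⟨i - a - 1, h⟩ else v₀,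
    fun i hi => ?_, fun i hi j hj hij => ?_⟩
  · simp only [hlt hi, dif_pos]
    exact S.orderEmbOfFin_mem rfl _
  · simp only [hlt hi, hlt hj, dif_pos]
    refine (S.orderEmbOfFin rfl).strictMono (Fin.mk_lt_mk.2 ?_)
    have := hi.1
    omega

section UpperBound

variable {V : Type*} [LinearOrder V] {c : V → V → Bool} {b : Bool} {m k : ℕ} {S T : Finset V}

/-- `A ∪ B` is the vertex set of an ordered copy in color `b` of the complete split graph with
independent part `A` and clique `B`. Nothing is required of the edges inside `A`, and as in
`ContainsOrderedCopy` the color of the edge `{x, y}` with `x < y` is `c x y`. -/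
structure IsMonoCompleteSplit (c : V → V → Bool) (b : Bool) (A B : Finset V) : Prop where
  lt : ∀ x ∈ A, ∀ y ∈ B, x < y
  cross : ∀ x ∈ A, ∀ y ∈ B, c x y = b
  clique : ∀ x ∈ B, ∀ y ∈ B, x < y → c x y = b

/-- The vertex set `S` contains an ordered copy in color `b` of the complete split graph with `m`
independent vertices followed by a clique on `k` vertices. -/
def HasMonoCompleteSplit (c : V → V → Bool) (b : Bool) (m k : ℕ) (S : Finset V) : Prop :=
  ∃ A ⊆ S, ∃ B ⊆ S, A.card = m ∧ B.card = k ∧ IsMonoCompleteSplit c b A B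

/-- The left neighborhood of `v` in `S` in color `b`. -/
def leftNeighbors (c : V → V → Bool) (b : Bool) (S : Finset V) (v : V) : Finset V :=
  {u ∈ S | u < v ∧ c u v = b}

theorem mem_leftNeighbors {u v : V} : u ∈ leftNeighbors c b S v ↔ u ∈ S ∧ u < v ∧ c u v = b :=
  Finset.mem_filter

theorem card_leftNeighbors_add_card_leftNeighbors (c : V → V → Bool) (S : Finset V) (v : V) :
    (leftNeighbors c true S v).card + (leftNeighbors c false S v).card =
      (S.filter (· < v)).card := by
  rw [← Finset.card_filter_add_card_filter_not (s := S.filter (· < v)) (fun u => c u v = true)]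
  simp only [leftNeighbors, Finset.filter_filter, Bool.not_eq_true]

theorem card_filter_lt_max'_add_one (hS : S.Nonempty) :
    (S.filter (· < S.max' hS)).card + 1 = S.card := by
  have : S.filter (· < S.max' hS) = S.erase (S.max' hS) := by
    ext u
    rw [Finset.mem_filter, Finset.mem_erase, and_comm]
    exact and_congr_left fun hu => (S.le_max' u hu).lt_iff_ne
  rw [this, Finset.card_erase_add_one (S.max'_mem hS)]

namespace HasMonoCompleteSplit

theorem mono (hST : S ⊆ T) (h : HasMonoCompleteSplit c b m k S) :
    HasMonoCompleteSplit c b m k T := by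
  obtain ⟨A, hA, B, hB, h⟩ := h
  exact ⟨A, hA.trans hST, B, hB.trans hST, h⟩

theorem of_le_card (c : V → V → Bool) (b : Bool) (h : m ≤ S.card) :
    HasMonoCompleteSplit c b m 0 S := by
  obtain ⟨A, hAS, hA⟩ := Finset.exists_subset_card_eq h
  exact ⟨A, hAS, ∅, S.empty_subset, hA, rfl, by simp, by simp, by simp⟩

theorem of_leftNeighbors {v : V} (hv : v ∈ S)
    (h : HasMonoCompleteSplit c b m k (leftNeighbors c b S v)) :
    HasMonoCompleteSplit c b m (k + 1) S := by
  obtain ⟨A, hA, B, hB, hAm, hBk, hAB⟩ := h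
  have hS {u} (hu : u ∈ leftNeighbors c b S v) : u ∈ S := (mem_leftNeighbors.1 hu).1
  have hlt {u} (hu : u ∈ leftNeighbors c b S v) : u < v := (mem_leftNeighbors.1 hu).2.1
  have hcol {u} (hu : u ∈ leftNeighbors c b S v) : c u v = b := (mem_leftNeighbors.1 hu).2.2
  have hvB : v ∉ B := fun hvB => (hlt (hB hvB)).false
  refine ⟨A, fun u hu => hS (hA hu), insert v B,
    Finset.insert_subset hv fun u hu => hS (hB hu), hAm,
    by rw [Finset.card_insert_of_notMem hvB, hBk], ?lt, ?cross, ?clique⟩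
  case lt =>
    intro x hx
    exact (Finset.forall_mem_insert _ _ _).2 ⟨hlt (hA hx), hAB.lt x hx⟩
  case cross =>
    intro x hx
    exact (Finset.forall_mem_insert _ _ _).2 ⟨hcol (hA hx), hAB.cross x hx⟩
  case clique =>
    intro x hx y hy hxy
    rcases Finset.mem_insert.1 hx with rfl | hxB <;> rcases Finset.mem_insert.1 hy with rfl | hyB
    · exact absurd hxy (lt_irrefl _)
    · exact absurd hxy (hlt (hB hyB)).asymm
    · exact hcol (hB hxB)
    · exact hAB.clique x hxB y hyB hxy

end HasMonoCompleteSplit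

theorem hasMonoCompleteSplit_or_of_mul_choose_le_card (c : V → V → Bool) (hm : 0 < m) (k l : ℕ)
    (S : Finset V) (hS : m * (k + l).choose k ≤ S.card) :
    HasMonoCompleteSplit c true m k S ∨ HasMonoCompleteSplit c false m l S := by
  match k, l with
  | 0, l => exact .inl (.of_le_card c true (by simpa using hS))
  | k + 1, 0 => exact .inr (.of_le_card c false (by simpa using hS))
  | k + 1, l + 1 =>
    have pascal : (k + 1 + (l + 1)).choose (k + 1) =
        (k + (l + 1)).choose k + (k + 1 + l).choose (k + 1) := by
      rw [← Nat.add_assoc, Nat.choose_succ_succ', Nat.add_right_comm k 1 l, Nat.add_assoc k l 1]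
    have hne : S.Nonempty := Finset.card_pos.1 <|
      (Nat.mul_pos hm (Nat.choose_pos (Nat.le_add_right _ _))).trans_le hS
    have hv := S.max'_mem hne
    set v := S.max' hne
    have hcard :
        (leftNeighbors c true S v).card + (leftNeighbors c false S v).card + 1 = S.card := by
      rw [card_leftNeighbors_add_card_leftNeighbors, card_filter_lt_max'_add_one]
    rw [pascal, Nat.mul_add] at hS
    obtain hred | hblue : m * (k + (l + 1)).choose k ≤ (leftNeighbors c true S v).card ∨
        m * (k + 1 + l).choose (k + 1) ≤ (leftNeighbors c false S v).card := by omega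
    · exact (hasMonoCompleteSplit_or_of_mul_choose_le_card c hm k (l + 1) _ hred).imp
        (.of_leftNeighbors hv) (.mono (Finset.filter_subset _ _))
    · exact (hasMonoCompleteSplit_or_of_mul_choose_le_card c hm (k + 1) l _ hblue).imp
        (.mono (Finset.filter_subset _ _)) (.of_leftNeighbors hv)
termination_by k + l

end UpperBound

/-- The edges of the ordered complete split graph on `{1,…,m + k}`: all pairs `i < j` except those
inside `{1,…,m}`. -/
def completeSplitEdges (m k : ℕ) : Finset (ℕ × ℕ) :=
  {e ∈ Finset.Icc 1 (m + k) ×ˢ Finset.Icc 1 (m + k) | e.1 < e.2 ∧ m < e.2}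

theorem completeSplitEdges_two_two :
    completeSplitEdges 2 2 = {(1, 3), (1, 4), (2, 3), (2, 4), (3, 4)} := by
  decide

theorem HasMonoCompleteSplit.containsOrderedCopy {c : ℕ → ℕ → Bool} {b : Bool} {m k N : ℕ}
    (h : HasMonoCompleteSplit c b m k (Finset.Icc 1 N)) :
    ContainsOrderedCopy (m + k) N (completeSplitEdges m k) c b := by
  obtain ⟨A, hA, B, hB, hAm, hBk, hAB⟩ := h
  obtain ⟨f, hfA, hf⟩ := exists_mapsTo_strictMonoOn_Ioc A 0
  obtain ⟨g, hgB, hg⟩ := exists_mapsTo_strictMonoOn_Ioc B m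
  rw [hAm, Nat.zero_add] at hfA hf
  rw [hBk] at hgB hg
  refine ⟨fun i => if i ≤ m then f i else g i, fun i hi hi' => ?range, fun i j hi hij hj => ?mono,
    fun e he => ?edges⟩
  case range =>
    dsimp only
    split_ifs with him
    · exact Finset.mem_Icc.1 (hA (hfA ⟨hi, him⟩))
    · exact Finset.mem_Icc.1 (hB (hgB ⟨not_le.1 him, hi'⟩))
  case mono =>
    rcases le_or_gt j m with hjm | hjm
    · simp only [hjm, hij.le.trans hjm, if_true]
      exact hf ⟨hi, hij.le.trans hjm⟩ ⟨hi.trans hij.le, hjm⟩ hij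
    · rcases le_or_gt i m with him | him
      · simp only [him, hjm.not_ge, if_true, if_false]
        exact hAB.lt _ (hfA ⟨hi, him⟩) _ (hgB ⟨hjm, hj⟩)
      · simp only [him.not_ge, hjm.not_ge, if_false]
        exact hg ⟨him, hij.le.trans hj⟩ ⟨hjm, hj⟩ hij
  case edges =>
    obtain ⟨i, j⟩ := e
    simp only [completeSplitEdges, Finset.mem_filter, Finset.mem_product, Finset.mem_Icc] at he
    obtain ⟨⟨⟨hi, hi'⟩, -, hj⟩, hij, hjm⟩ := he
    rcases le_or_gt i m with him | him
    · simp only [him, hjm.not_ge, if_true, if_false]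
      exact hAB.cross _ (hfA ⟨hi, him⟩) _ (hgB ⟨hjm, hj⟩)
    · simp only [him.not_ge, hjm.not_ge, if_false]
      exact hAB.clique _ (hgB ⟨him, hi'⟩) _ (hgB ⟨hjm, hj⟩) (hg ⟨him, hi'⟩ ⟨hjm, hj⟩ hij)

theorem containsMonoOrderedCopy_completeSplitEdges {m k N : ℕ} (hm : 0 < m)
    (hN : m * k.centralBinom ≤ N) (c : ℕ → ℕ → Bool) :
    ContainsMonoOrderedCopy (m + k) N (completeSplitEdges m k) c := by
  have hcard : m * (k + k).choose k ≤ (Finset.Icc 1 N).card := by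
    rwa [Nat.card_Icc, Nat.add_sub_cancel, ← Nat.two_mul, ← Nat.centralBinom_eq_two_mul_choose]
  rcases hasMonoCompleteSplit_or_of_mul_choose_le_card c hm k k _ hcard with h | h
  · exact ⟨true, h.containsOrderedCopy⟩
  · exact ⟨false, h.containsOrderedCopy⟩

/-- The vertices of the Paley graph on `ZMod 17` assigned to the positions `1,…,11`, found by a
computer search. Positions outside this range get the value `0`. -/
def paleyVertex (i : ℕ) : ZMod 17 :=
  ([0, 0, 1, 2, 5, 10, 11, 16, 14, 3, 9, 15] : List (ZMod 17)).getD i 0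

/-- The coloring of the pairs of positions by adjacency in the Paley graph on `ZMod 17`. It is
symmetric since `-1` is a square modulo `17`. -/
def paleyColoring (i j : ℕ) : Bool :=
  decide (IsSquare (paleyVertex j - paleyVertex i))

theorem paleyColoring_no_diamond : ∀ s ∈ Finset.Icc 1 11, ∀ r ∈ Finset.Ico 1 s,
    ∀ q ∈ Finset.Ico 1 r, ∀ p ∈ Finset.Ico 1 q, ∀ b : Bool,
      ¬ (paleyColoring p r = b ∧ paleyColoring p s = b ∧ paleyColoring q r = b ∧
        paleyColoring q s = b ∧ paleyColoring r s = b) := by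
  decide +kernel

theorem ContainsOrderedCopy.exists_diamond {N : ℕ} {c : ℕ → ℕ → Bool} {b : Bool}
    (h : ContainsOrderedCopy 4 N {(1, 3), (1, 4), (2, 3), (2, 4), (3, 4)} c b) :
    ∃ s ∈ Finset.Icc 1 N, ∃ r ∈ Finset.Ico 1 s, ∃ q ∈ Finset.Ico 1 r, ∃ p ∈ Finset.Ico 1 q,
      c p r = b ∧ c p s = b ∧ c q r = b ∧ c q s = b ∧ c r s = b := by
  obtain ⟨φ, hrange, hmono, hcol⟩ := h
  have hpos {i : ℕ} (hi : 1 ≤ i) (hi' : i ≤ 4) : 1 ≤ φ i := (hrange i hi hi').1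
  simp only [Finset.mem_Icc, Finset.mem_Ico]
  exact ⟨φ 4, hrange 4 (by decide) le_rfl,
    φ 3, ⟨hpos (by decide) (by decide), hmono 3 4 (by decide) (by decide) (by decide)⟩,
    φ 2, ⟨hpos (by decide) (by decide), hmono 2 3 (by decide) (by decide) (by decide)⟩,
    φ 1, ⟨hpos (by decide) (by decide), hmono 1 2 (by decide) (by decide) (by decide)⟩,
    hcol (1, 3) (by decide), hcol (1, 4) (by decide), hcol (2, 3) (by decide),
    hcol (2, 4) (by decide), hcol (3, 4) (by decide)⟩

/-- The ordered Ramsey number of the diamond `K₄ - e` on vertex set `{1,2,3,4}` with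
all edges of `K₄` except `(1, 2)` equals `12`: every 2-coloring of the edges
of the complete graph on `{1,…,12}` contains a monochromatic ordered copy, and
some 2-coloring of the edges of the complete graph on `{1,…,11}` contains
none. -/
theorem orderedRamsey_diamond_missing_12_eq :
    (∀ c : ℕ → ℕ → Bool,
      ContainsMonoOrderedCopy 4 12 {(1, 3), (1, 4), (2, 3), (2, 4), (3, 4)} c) ∧
    (∃ c : ℕ → ℕ → Bool,
      ¬ ContainsMonoOrderedCopy 4 11 {(1, 3), (1, 4), (2, 3), (2, 4), (3, 4)} c) := by
  constructor
  · rw [← completeSplitEdges_two_two]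
    exact containsMonoOrderedCopy_completeSplitEdges (m := 2) (k := 2) two_pos (by decide)
  · refine ⟨paleyColoring, ?_⟩
    rintro ⟨b, hb⟩
    obtain ⟨s, hs, r, hr, q, hq, p, hp, hdiamond⟩ := hb.exists_diamond
    exact paleyColoring_no_diamond s hs r hr q hq p hp b hdiamond
end
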